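/- arXiv:1301.4764 — 3 statements merged into one kernel-verified Lean document; each statement's English description precedes it below -/
import Mathlib

section
/- The set {1, 63} is contained in J_3[28]; that is, for each k ∈ {1, 63} there exist three S(2,4,28) designs on a common 28-element point set whose pairwise intersections coincide and have cardinality k. -/
/-!
Identify the points `0, …, 26` with the elements of `(ℤ/3)³` via ternary digits, and let `27` be a
point at infinity. The 27 translates of each of the base blocks `{0, 8, 22, 24}` and
`{0, 14, 20, 23}`, together with the 9 translates of `{0, 1, 2, ∞}`, form an `S(2,4,28)` design:
the differences of the first two base blocks cover each element of `(ℤ/3)³` outside the subgroup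
`{0, 1, 2}` exactly once, and the cosets of that subgroup take care of the remaining pairs.
Taking this design three times gives `63 ∈ J_3[28]`.

The permutation `x ↦ 9 x mod 28` of the labels has order 3. The images of the design under its
powers (multipliers `1, 9, 25`) are three designs, any two of which share only the block
`{0, 5, 13, 17}`, which gives `1 ∈ J_3[28]`.

Blocks are encoded as bit masks, so that the defining properties become finite computations on
natural numbers; `isS24_design` and `design_inter` carry these over to sets of blocks.
-/

/-- The number of blocks of an `S(2,4,v)` design: `b_v = v(v-1)/12`. -/
def steinerBlockCount (v : ℕ) : ℕ := v * (v - 1) / 12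

/-- `B` is the block set of a Steiner system `S(2,4,·)` on the point set `V`:
every block is a 4-element subset of `V` and every pair of distinct points of `V`
lies in exactly one block. -/
def IsS24 {α : Type} [DecidableEq α] (V : Finset α) (B : Finset (Finset α)) : Prop :=
  (∀ b ∈ B, b ⊆ V ∧ b.card = 4) ∧
  ∀ x y : α, x ∈ V → y ∈ V → x ≠ y → ∃! b, b ∈ B ∧ x ∈ b ∧ y ∈ b

/-- Three block sets have pairwise-coincident intersections. -/
def CoincidentInts {α : Type} [DecidableEq α] (B1 B2 B3 : Finset (Finset α)) : Prop :=
  B1 ∩ B2 = B1 ∩ B3 ∧ B1 ∩ B2 = B2 ∩ B3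

/-- `J_3[v]`: the set of `k` such that there exist three `S(2,4,v)` designs on a common
`v`-element point set whose pairwise intersections coincide and have cardinality `k`. -/
def J3 (v : ℕ) : Set ℕ :=
  {k | ∃ B1 B2 B3 : Finset (Finset (Fin v)),
    IsS24 Finset.univ B1 ∧ IsS24 Finset.univ B2 ∧ IsS24 Finset.univ B3 ∧
    CoincidentInts B1 B2 B3 ∧ (B1 ∩ B2 ∩ B3).card = k}

/-- `I_3[v] = {0,1,...,b_v} \ {b_v-7, ..., b_v-1}`. -/
def I3 (v : ℕ) : Set ℕ :=
  {k | k ≤ steinerBlockCount v} \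
    {steinerBlockCount v - 7, steinerBlockCount v - 6, steinerBlockCount v - 5,
     steinerBlockCount v - 4, steinerBlockCount v - 3, steinerBlockCount v - 2,
     steinerBlockCount v - 1}

/-- The set of points of `Fin 28` encoded by the bit mask `m`. -/
def maskSupport (m : ℕ) : Finset (Fin 28) := Finset.univ.filter fun x => m.testBit x = true

/-- The set of blocks encoded by a list of bit masks. -/
def design (L : List ℕ) : Finset (Finset (Fin 28)) := (L.map maskSupport).toFinset

/-- Translation by `t` on `(ℤ/3)³ ∪ {∞}`, where an element of `(ℤ/3)³` is a number below 27 written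
in base 3 and `∞` is 27. -/
def shiftBy (t x : ℕ) : ℕ :=
  if x = 27 then 27
  else (t / 9 + x / 9) % 3 * 9 + (t / 3 + x / 3) % 3 * 3 + (t + x) % 3

/-- The bit mask of the image of the block `b` under translation by `t` followed by multiplication
by `c` modulo 28. -/
def blockMask (c t : ℕ) (b : List ℕ) : ℕ := (b.map fun x => 2 ^ (c * shiftBy t x % 28)).sum

/-- The bit masks of the 63 blocks of the design, with its labels multiplied by `c` modulo 28. The
stabilizer of `{0, 1, 2, ∞}` is `{0, 1, 2}`, so this block is translated by multiples of 3 only. -/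
def masks (c : ℕ) : List ℕ :=
  (List.range 27).map (fun t => blockMask c t [0, 8, 22, 24]) ++
  (List.range 27).map (fun t => blockMask c t [0, 14, 20, 23]) ++
  (List.range 9).map (fun j => blockMask c (3 * j) [0, 1, 2, 27])

lemma mem_maskSupport {m : ℕ} {x : Fin 28} : x ∈ maskSupport m ↔ m.testBit x = true := by
  simp [maskSupport]

lemma mem_design {L : List ℕ} {b : Finset (Fin 28)} :
    b ∈ design L ↔ ∃ m ∈ L, maskSupport m = b := by
  simp [design]

lemma maskSupport_inj {m n : ℕ} (hm : m < 2 ^ 28) (hn : n < 2 ^ 28)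
    (h : maskSupport m = maskSupport n) : m = n := by
  apply Nat.eq_of_testBit_eq
  intro i
  by_cases hi : i < 28
  · have := Finset.ext_iff.mp h ⟨i, hi⟩
    simp only [mem_maskSupport] at this
    exact Bool.eq_iff_iff.mpr this
  · have h28 : 2 ^ 28 ≤ 2 ^ i := Nat.pow_le_pow_right (by norm_num) (by omega)
    rw [Nat.testBit_lt_two_pow (by omega), Nat.testBit_lt_two_pow (by omega)]

lemma isS24_design {L : List ℕ} (hcard : ∀ m ∈ L, (maskSupport m).card = 4)
    (hpair : ∀ x y : Fin 28, x < y →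
      (L.filter fun m => m.testBit x && m.testBit y).length = 1) :
    IsS24 Finset.univ (design L) := by
  have hpair' : ∀ x y : Fin 28, x ≠ y →
      (L.filter fun m => m.testBit x && m.testBit y).length = 1 := by
    intro x y hxy
    rcases lt_or_gt_of_ne hxy with h | h
    · exact hpair x y h
    · simpa only [Bool.and_comm] using hpair y x h
  refine ⟨fun b hb => ?_, fun x y _ _ hxy => ?_⟩
  · obtain ⟨m, hm, rfl⟩ := mem_design.mp hb
    exact ⟨Finset.subset_univ _, hcard m hm⟩
  · obtain ⟨m, hm⟩ := List.length_eq_one_iff.mp (hpair' x y hxy)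
    have key : ∀ n, (n ∈ L ∧ n.testBit x = true ∧ n.testBit y = true) ↔ n = m := by
      intro n
      have : n ∈ L.filter (fun m => m.testBit x && m.testBit y) ↔ n ∈ [m] := by rw [hm]
      simpa using this
    obtain ⟨hmL, hx, hy⟩ := (key m).mpr rfl
    refine ⟨maskSupport m, ⟨mem_design.mpr ⟨m, hmL, rfl⟩, mem_maskSupport.mpr hx,
      mem_maskSupport.mpr hy⟩, ?_⟩
    rintro b ⟨hb, hxb, hyb⟩
    obtain ⟨n, hn, rfl⟩ := mem_design.mp hb
    rw [(key n).mp ⟨hn, mem_maskSupport.mp hxb, mem_maskSupport.mp hyb⟩]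

lemma design_inter {L L' : List ℕ} (hL : ∀ m ∈ L, m < 2 ^ 28) (hL' : ∀ m ∈ L', m < 2 ^ 28) :
    design L ∩ design L' = design (L.filter fun m => L'.contains m) := by
  ext b
  simp only [Finset.mem_inter, mem_design, List.mem_filter, List.contains_iff_mem]
  constructor
  · rintro ⟨⟨m, hm, rfl⟩, n, hn, hnm⟩
    obtain rfl := maskSupport_inj (hL' n hn) (hL m hm) hnm
    exact ⟨n, ⟨hm, hn⟩, rfl⟩
  · rintro ⟨m, ⟨hm, hm'⟩, rfl⟩
    exact ⟨⟨m, hm, rfl⟩, m, hm', rfl⟩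

lemma card_design {L : List ℕ} (hL : ∀ m ∈ L, m < 2 ^ 28) (hnd : L.Nodup) :
    (design L).card = L.length := by
  rw [design, List.toFinset_card_of_nodup, List.length_map]
  exact hnd.map_on fun m hm n hn h => maskSupport_inj (hL m hm) (hL n hn) h

lemma masks_lt : ∀ c ∈ [1, 9, 25], ∀ m ∈ masks c, m < 2 ^ 28 := by
  decide +kernel

lemma masks_card : ∀ c ∈ [1, 9, 25], ∀ m ∈ masks c, (maskSupport m).card = 4 := by
  decide +kernel

lemma masks_pair : ∀ c ∈ [1, 9, 25], ∀ x y : Fin 28, x < y →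
    ((masks c).filter fun m => m.testBit x && m.testBit y).length = 1 := by
  decide +kernel

lemma masks_isS24 (c : ℕ) (hc : c ∈ [1, 9, 25]) : IsS24 Finset.univ (design (masks c)) :=
  isS24_design (masks_card c hc) (masks_pair c hc)

/-- Any two of the three designs share exactly the block `{0, 5, 13, 17}`. -/
lemma masks_inter (c d : ℕ) (hc : c ∈ [1, 9, 25]) (hd : d ∈ [1, 9, 25]) (hcd : c ≠ d) :
    design (masks c) ∩ design (masks d) =
      design [2 ^ 0 + 2 ^ 5 + 2 ^ 13 + 2 ^ 17] := by
  rw [design_inter (masks_lt c hc) (masks_lt d hd)]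
  congr 1
  have : ∀ c ∈ [1, 9, 25], ∀ d ∈ [1, 9, 25], c ≠ d →
      (masks c).filter (fun m => (masks d).contains m) =
        [2 ^ 0 + 2 ^ 5 + 2 ^ 13 + 2 ^ 17] := by
    decide +kernel
  exact this c hc d hd hcd

/-- `{1, 63} ⊆ J_3[28]`. -/
theorem stmt6 : ({1, 63} : Set ℕ) ⊆ J3 28 := by
  rintro k (rfl | rfl)
  · have h12 := masks_inter 1 9 (by simp) (by simp) (by simp)
    have h13 := masks_inter 1 25 (by simp) (by simp) (by simp)
    have h23 := masks_inter 9 25 (by simp) (by simp) (by simp)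
    refine ⟨design (masks 1), design (masks 9), design (masks 25), masks_isS24 _ (by simp),
      masks_isS24 _ (by simp), masks_isS24 _ (by simp), ⟨h12.trans h13.symm, h12.trans h23.symm⟩, ?_⟩
    rw [Finset.inter_assoc, h23, ← h12, ← Finset.inter_assoc, Finset.inter_self, h12]
    simp [design]
  · refine ⟨design (masks 1), design (masks 1), design (masks 1), masks_isS24 _ (by simp),
      masks_isS24 _ (by simp), masks_isS24 _ (by simp), ⟨rfl, rfl⟩, ?_⟩
    rw [Finset.inter_self, Finset.inter_self, card_design (masks_lt 1 (by simp))]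
    · simp [masks]
    · decide +kernel
end

section
/- The set {0, 1, 2, 4, 16} is contained in J_{p3}[16]; that is, for each k ∈ {0, 1, 2, 4, 16} there exist three S(2,4,16) designs on a common 16-element point set, all containing a common parallel class P, whose block sets have pairwise-coincident intersections, and such that the number of common blocks not belonging to P equals k. -/
/-- The parallel class of horizontal lines; the point with coordinates `(i, j)` is `4 * i + j`. -/
def rows : Finset (Finset (Fin 16)) :=
  {{0, 1, 2, 3}, {4, 5, 6, 7}, {8, 9, 10, 11}, {12, 13, 14, 15}}

/-- The affine plane of order 4: the horizontal lines, and the lines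
`{(i, c + m * i) | i ∈ GF(4)}`, listed by slope `m`. -/
def plane : Finset (Finset (Fin 16)) :=
  rows ∪
  {{0, 4, 8, 12}, {1, 5, 9, 13}, {2, 6, 10, 14}, {3, 7, 11, 15},
   {0, 5, 10, 15}, {1, 4, 11, 14}, {2, 7, 8, 13}, {3, 6, 9, 12},
   {0, 6, 11, 13}, {1, 7, 10, 12}, {2, 4, 9, 15}, {3, 5, 8, 14},
   {0, 7, 9, 14}, {1, 6, 8, 15}, {2, 5, 11, 12}, {3, 4, 10, 13}}

/-- The image of `plane` under a map of the points. -/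
def move (f : Fin 16 → Fin 16) : Finset (Finset (Fin 16)) :=
  plane.image (Finset.image f)

/-- Unique existence in a finite set, in a form that is decided by running through that set only,
rather than through all subsets of the points. -/
theorem existsUnique_of_card_filter {β : Type} {s : Finset β} {p : β → Prop} [DecidablePred p]
    (h : (s.filter p).card = 1) : ∃! b, b ∈ s ∧ p b := by
  obtain ⟨a, ha⟩ := Finset.card_eq_one.mp h
  refine ⟨a, by simpa using ha.ge (Finset.mem_singleton_self a), fun b hb => ?_⟩
  simpa [ha] using Finset.mem_filter.mpr hb

theorem isS24_plane : IsS24 Finset.univ plane := by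
  have hcard : ∀ b ∈ plane, b.card = 4 := by simp [plane, rows]
  have hpair : ∀ x y : Fin 16, x ≠ y →
      (plane.filter fun b => x ∈ b ∧ y ∈ b).card = 1 := by decide +kernel
  exact ⟨fun b hb => ⟨Finset.subset_univ b, hcard b hb⟩,
    fun x y _ _ hxy => existsUnique_of_card_filter (hpair x y hxy)⟩

theorem existsUnique_mem_rows (x : Fin 16) : ∃! b, b ∈ rows ∧ x ∈ b := by
  have h : ∀ x : Fin 16, (rows.filter fun b => x ∈ b).card = 1 := by decide +kernel
  exact existsUnique_of_card_filter (h x)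

theorem isS24_move {f : Fin 16 → Fin 16} (hf : Function.Injective f) :
    IsS24 Finset.univ (move f) := by
  constructor
  · intro b hb
    obtain ⟨c, hc, rfl⟩ := Finset.mem_image.mp hb
    exact ⟨Finset.subset_univ _,
      (Finset.card_image_of_injective c hf).trans (isS24_plane.1 c hc).2⟩
  · intro x y _ _ hxy
    obtain ⟨x, rfl⟩ := Finite.surjective_of_injective hf x
    obtain ⟨y, rfl⟩ := Finite.surjective_of_injective hf y
    obtain ⟨c, ⟨hc, hxc, hyc⟩, huniq⟩ :=
      isS24_plane.2 x y (Finset.mem_univ x) (Finset.mem_univ y) (fun h => hxy (congrArg f h))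
    refine ⟨c.image f, ⟨Finset.mem_image_of_mem _ hc, Finset.mem_image_of_mem f hxc,
      Finset.mem_image_of_mem f hyc⟩, ?_⟩
    rintro b ⟨hb, hxb, hyb⟩
    obtain ⟨d, hd, rfl⟩ := Finset.mem_image.mp hb
    rw [huniq d ⟨hd, hf.mem_finset_image.mp hxb, hf.mem_finset_image.mp hyb⟩]

/-- Two permutations of the points realise `k` as soon as the resulting three designs pass the
finite checks on their intersections. -/
theorem witness (k : ℕ) (f g : Fin 16 → Fin 16)
    (hf : Function.Injective f) (hg : Function.Injective g)
    (hP : rows ⊆ plane ∩ move f ∩ move g)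
    (hI : plane ∩ move f = plane ∩ move g ∧ plane ∩ move f = move f ∩ move g)
    (hk : ((plane ∩ move f ∩ move g) \ rows).card = k) :
    ∃ (B1 B2 B3 P : Finset (Finset (Fin 16))),
      IsS24 Finset.univ B1 ∧ IsS24 Finset.univ B2 ∧ IsS24 Finset.univ B3 ∧
      P ⊆ B1 ∩ B2 ∩ B3 ∧ (∀ x : Fin 16, ∃! b, b ∈ P ∧ x ∈ b) ∧
      CoincidentInts B1 B2 B3 ∧ ((B1 ∩ B2 ∩ B3) \ P).card = k :=
  ⟨plane, move f, move g, rows, isS24_plane, isS24_move hf, isS24_move hg, hP,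
    existsUnique_mem_rows, hI, hk⟩

/-- `{0,1,2,4,16} ⊆ J_{p3}[16]`: for each such `k` there exist three
`S(2,4,16)` designs with a common parallel class `P` (contained in all pairwise
intersections), pairwise-coincident intersections, and exactly `k` common blocks
outside `P`. -/
theorem stmt8 : ∀ k ∈ ({0, 1, 2, 4, 16} : Set ℕ),
    ∃ (B1 B2 B3 P : Finset (Finset (Fin 16))),
      IsS24 Finset.univ B1 ∧ IsS24 Finset.univ B2 ∧ IsS24 Finset.univ B3 ∧
      P ⊆ B1 ∩ B2 ∩ B3 ∧ (∀ x : Fin 16, ∃! b, b ∈ P ∧ x ∈ b) ∧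
      CoincidentInts B1 B2 B3 ∧ ((B1 ∩ B2 ∩ B3) \ P).card = k := by
  rintro k (rfl | rfl | rfl | rfl | rfl)
  · exact witness 0
      ![0, 1, 2, 3, 4, 5, 6, 7, 8, 9, 10, 11, 13, 12, 15, 14]
      ![0, 1, 2, 3, 4, 5, 6, 7, 8, 9, 10, 11, 14, 15, 12, 13]
      (by decide +kernel) (by decide +kernel) (by decide +kernel) (by decide +kernel)
      (by decide +kernel)
  · exact witness 1
      ![0, 1, 2, 3, 4, 5, 6, 7, 8, 10, 11, 9, 12, 14, 15, 13]
      ![0, 1, 2, 3, 4, 5, 6, 7, 8, 11, 9, 10, 12, 15, 13, 14]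
      (by decide +kernel) (by decide +kernel) (by decide +kernel) (by decide +kernel)
      (by decide +kernel)
  · exact witness 2
      ![0, 1, 2, 3, 4, 5, 6, 7, 8, 9, 11, 10, 12, 14, 15, 13]
      ![0, 1, 2, 3, 4, 7, 6, 5, 8, 9, 10, 11, 12, 15, 13, 14]
      (by decide +kernel) (by decide +kernel) (by decide +kernel) (by decide +kernel)
      (by decide +kernel)
  · exact witness 4
      ![0, 1, 2, 3, 4, 5, 6, 7, 8, 9, 10, 11, 12, 14, 15, 13]
      ![0, 1, 2, 3, 4, 5, 6, 7, 8, 9, 10, 11, 12, 15, 13, 14]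
      (by decide +kernel) (by decide +kernel) (by decide +kernel) (by decide +kernel)
      (by decide +kernel)
  · exact witness 16 id id
      (by decide +kernel) (by decide +kernel) (by decide +kernel) (by decide +kernel)
      (by decide +kernel)
end

section
/- For each i ∈ {0, 1, 3, 15} there exist three 4-GDDs of type 3^5 on a common 15-element point set with the same group partition, whose block sets have pairwise-coincident intersections of cardinality i. -/
/-- `Gs` is a partition of the (finite) point type into `u` groups each of size `g`. -/
def IsGroupPartition {α : Type} [DecidableEq α] (Gs : Finset (Finset α)) (u g : ℕ) : Prop :=
  Gs.card = u ∧ (∀ G ∈ Gs, G.card = g) ∧ ∀ x : α, ∃! G, G ∈ Gs ∧ x ∈ G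

/-- `A` is the block set of a 4-GDD with group set `Gs`: blocks have size 4, meet each
group in at most one point, and every pair of points from distinct groups lies in
exactly one block. -/
def IsGDD4 {α : Type} [DecidableEq α] (Gs : Finset (Finset α)) (A : Finset (Finset α)) : Prop :=
  (∀ b ∈ A, b.card = 4) ∧
  (∀ b ∈ A, ∀ G ∈ Gs, (b ∩ G).card ≤ 1) ∧
  ∀ G1 ∈ Gs, ∀ G2 ∈ Gs, G1 ≠ G2 → ∀ x ∈ G1, ∀ y ∈ G2,
    ∃! b, b ∈ A ∧ x ∈ b ∧ y ∈ b


/-- The groups `{3g, 3g+1, 3g+2}`, `g < 5`: the lines through the removed point of `AG(2,4)`.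
With `ω` a generator of `F₄ˣ`, the point `3g + p` is `ω ^ p • d_g`, where `d_0 = (1,0)` and
`d_1, …, d_4` are `(m,1)` for `m = 0, 1, ω, ω²`. -/
def planeGroup : Fin 5 → Finset (Fin 15) :=
  ![{0, 1, 2}, {3, 4, 5}, {6, 7, 8}, {9, 10, 11}, {12, 13, 14}]

/-- The 15 lines of `AG(2,4)` that miss the origin, in the labelling of `planeGroup`. -/
def planeBlock : Fin 15 → Finset (Fin 15) :=
  ![{0, 3, 10, 14}, {0, 4, 8, 9}, {0, 5, 7, 12}, {0, 6, 11, 13}, {1, 3, 8, 13},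
    {1, 4, 11, 12}, {1, 5, 6, 10}, {1, 7, 9, 14}, {2, 3, 7, 11}, {2, 4, 6, 14},
    {2, 5, 9, 13}, {2, 8, 10, 12}, {3, 6, 9, 12}, {4, 7, 10, 13}, {5, 8, 11, 14}]

/-- The set of groups of the punctured plane. -/
def planeGroups : Finset (Finset (Fin 15)) := Finset.univ.image planeGroup

/-- The set of blocks of the punctured plane. -/
def planeBlocks : Finset (Finset (Fin 15)) := Finset.univ.image planeBlock

theorem forall_mem_planeGroups {p : Finset (Fin 15) → Prop} :
    (∀ G ∈ planeGroups, p G) ↔ ∀ g, p (planeGroup g) := by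
  simp [planeGroups]

theorem forall_mem_planeBlocks {p : Finset (Fin 15) → Prop} :
    (∀ b ∈ planeBlocks, p b) ↔ ∀ k, p (planeBlock k) := by
  simp [planeBlocks]

/-- The image of a block set under a permutation of the points. -/
def permBlocks (σ : Equiv.Perm (Fin 15)) (A : Finset (Finset (Fin 15))) :
    Finset (Finset (Fin 15)) :=
  A.image fun b => b.image σ

theorem isGroupPartition_planeGroups : IsGroupPartition planeGroups 5 3 := by
  refine ⟨by decide +kernel, forall_mem_planeGroups.2 (by decide +kernel), fun x => ?_⟩
  have h : ∀ x, ∃ g, x ∈ planeGroup g ∧ ∀ g', x ∈ planeGroup g' → g' = g := by decide +kernel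
  obtain ⟨g, hg, huniq⟩ := h x
  refine ⟨planeGroup g, ⟨Finset.mem_image_of_mem _ (Finset.mem_univ g), hg⟩, ?_⟩
  rintro _ ⟨hG, hx⟩
  obtain ⟨g', -, rfl⟩ := Finset.mem_image.mp hG
  rw [huniq g' hx]

theorem isGDD4_planeBlocks : IsGDD4 planeGroups planeBlocks := by
  refine ⟨forall_mem_planeBlocks.2 (by decide +kernel), ?_, ?_⟩
  · simp only [forall_mem_planeBlocks, forall_mem_planeGroups]
    decide +kernel
  · -- In the chosen labelling, the group of a point `x` is determined by `x / 3`.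
    have hgroup : ∀ g x, x ∈ planeGroup g → x.val / 3 = g.val := by decide +kernel
    have hpair : ∀ x y : Fin 15, x.val / 3 ≠ y.val / 3 →
        ∃ k, (x ∈ planeBlock k ∧ y ∈ planeBlock k) ∧
          ∀ l, x ∈ planeBlock l → y ∈ planeBlock l → l = k := by
      decide +kernel
    simp only [forall_mem_planeGroups]
    intro g1 g2 hne x hx y hy
    have hxy : x.val / 3 ≠ y.val / 3 := by
      rw [hgroup g1 x hx, hgroup g2 y hy]
      exact fun h => hne (congrArg planeGroup (Fin.ext h))
    obtain ⟨k, hk, huniq⟩ := hpair x y hxy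
    refine ⟨planeBlock k, ⟨Finset.mem_image_of_mem _ (Finset.mem_univ k), hk⟩, ?_⟩
    rintro _ ⟨hb, hxb, hyb⟩
    obtain ⟨l, -, rfl⟩ := Finset.mem_image.mp hb
    rw [huniq l hxb hyb]

/-- Permuting the points inside the groups turns a 4-GDD into a 4-GDD with the same groups. -/
theorem IsGDD4.image_perm {Gs A : Finset (Finset (Fin 15))} (hA : IsGDD4 Gs A)
    (σ : Equiv.Perm (Fin 15)) (hσ : ∀ G ∈ Gs, G.image σ = G) :
    IsGDD4 Gs (permBlocks σ A) := by
  obtain ⟨hcard, hmeet, hpair⟩ := hA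
  have hmem (b : Finset (Fin 15)) (x : Fin 15) : x ∈ b.image σ ↔ σ.symm x ∈ b := by
    constructor
    · intro hx
      obtain ⟨z, hz, rfl⟩ := Finset.mem_image.mp hx
      simpa using hz
    · exact fun hx => Finset.mem_image.mpr ⟨_, hx, σ.apply_symm_apply x⟩
  refine ⟨?_, ?_, ?_⟩
  · intro b hb
    obtain ⟨c, hc, rfl⟩ := Finset.mem_image.mp hb
    rw [Finset.card_image_of_injective _ σ.injective, hcard c hc]
  · intro b hb G hG
    obtain ⟨c, hc, rfl⟩ := Finset.mem_image.mp hb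
    have h : c.image σ ∩ G = (c ∩ G).image σ := by
      rw [Finset.image_inter _ _ σ.injective, hσ G hG]
    rw [h, Finset.card_image_of_injective _ σ.injective]
    exact hmeet c hc G hG
  · intro G1 h1 G2 h2 hne x hx y hy
    -- The block through `x` and `y` is the image of the block through their preimages.
    rw [← hσ G1 h1, hmem] at hx
    rw [← hσ G2 h2, hmem] at hy
    obtain ⟨b, ⟨hb, hxb, hyb⟩, huniq⟩ := hpair G1 h1 G2 h2 hne _ hx _ hy
    refine ⟨b.image σ, ⟨Finset.mem_image_of_mem _ hb, (hmem b x).2 hxb, (hmem b y).2 hyb⟩, ?_⟩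
    rintro _ ⟨hc, hxc, hyc⟩
    obtain ⟨c, hcA, rfl⟩ := Finset.mem_image.mp hc
    rw [huniq c ⟨hcA, (hmem c x).1 hxc, (hmem c y).1 hyc⟩]

/-- The 3-cycle `a ↦ b ↦ c ↦ a`, for distinct `a`, `b`, `c`. -/
def threeCycle (a b c : Fin 15) : Equiv.Perm (Fin 15) :=
  Equiv.swap a b * Equiv.swap b c

/-- It suffices to give two permutations preserving every group such that the plane and its two
images intersect as required. -/
theorem exists_triple_of_perms {i : ℕ} (σ τ : Equiv.Perm (Fin 15))
    (hσ : ∀ g, (planeGroup g).image σ = planeGroup g)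
    (hτ : ∀ g, (planeGroup g).image τ = planeGroup g)
    (h : planeBlocks ∩ permBlocks σ planeBlocks = planeBlocks ∩ permBlocks τ planeBlocks ∧
      planeBlocks ∩ permBlocks σ planeBlocks =
        permBlocks σ planeBlocks ∩ permBlocks τ planeBlocks ∧
      (planeBlocks ∩ permBlocks σ planeBlocks ∩ permBlocks τ planeBlocks).card = i) :
    ∃ (Gs A1 A2 A3 : Finset (Finset (Fin 15))),
      IsGroupPartition Gs 5 3 ∧
      IsGDD4 Gs A1 ∧ IsGDD4 Gs A2 ∧ IsGDD4 Gs A3 ∧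
      CoincidentInts A1 A2 A3 ∧ (A1 ∩ A2 ∩ A3).card = i :=
  ⟨planeGroups, planeBlocks, permBlocks σ planeBlocks, permBlocks τ planeBlocks,
    isGroupPartition_planeGroups, isGDD4_planeBlocks,
    isGDD4_planeBlocks.image_perm σ (forall_mem_planeGroups.2 hσ),
    isGDD4_planeBlocks.image_perm τ (forall_mem_planeGroups.2 hτ), ⟨h.1, h.2.1⟩, h.2.2⟩

/-- for each `i ∈ {0,1,3,15}` there exist three 4-GDDs of type `3^5`
on a common 15-element point set with the same groups, whose block sets have
pairwise-coincident intersections of cardinality `i`. -/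
theorem stmt9 : ∀ i ∈ ({0, 1, 3, 15} : Set ℕ),
    ∃ (Gs A1 A2 A3 : Finset (Finset (Fin 15))),
      IsGroupPartition Gs 5 3 ∧
      IsGDD4 Gs A1 ∧ IsGDD4 Gs A2 ∧ IsGDD4 Gs A3 ∧
      CoincidentInts A1 A2 A3 ∧ (A1 ∩ A2 ∩ A3).card = i := by
  rintro i (rfl | rfl | rfl | rfl)
  · exact exists_triple_of_perms (threeCycle 9 10 11 * threeCycle 12 13 14)
      (threeCycle 9 11 10 * threeCycle 12 14 13)
      (by decide +kernel) (by decide +kernel) (by decide +kernel)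
  · exact exists_triple_of_perms (Equiv.swap 10 11 * threeCycle 12 13 14)
      (Equiv.swap 6 7 * threeCycle 12 14 13)
      (by decide +kernel) (by decide +kernel) (by decide +kernel)
  · exact exists_triple_of_perms (threeCycle 12 13 14)
      (threeCycle 12 14 13)
      (by decide +kernel) (by decide +kernel) (by decide +kernel)
  · exact exists_triple_of_perms 1 1
      (by decide +kernel) (by decide +kernel) (by decide +kernel)
end
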